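/- arXiv:2103.07698 — 3 statements merged into one kernel-verified Lean document; each statement's English description precedes it below -/
import Mathlib

section
/- For every τ in the complex upper half plane, E₄(τ)³ − E₆(τ)² = 1728·η(τ)²⁴. -/
open Complex

/-- `q = exp(2πiτ)`. -/
noncomputable def qq (τ : ℂ) : ℂ := Complex.exp (2 * Real.pi * Complex.I * τ)

/-- `σ_k(n) = Σ_{d ∣ n} d^k`, as a complex number. -/
noncomputable def sigmaC (k n : ℕ) : ℂ := ∑ d ∈ n.divisors, (d : ℂ) ^ k

/-- Eisenstein series `E₂(τ) = 1 - 24 Σ_{n≥1} σ₁(n) qⁿ`. -/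
noncomputable def E₂ (τ : ℂ) : ℂ := 1 - 24 * ∑' n : ℕ, sigmaC 1 (n + 1) * qq τ ^ (n + 1)

/-- Eisenstein series `E₄(τ) = 1 + 240 Σ_{n≥1} σ₃(n) qⁿ`. -/
noncomputable def E₄ (τ : ℂ) : ℂ := 1 + 240 * ∑' n : ℕ, sigmaC 3 (n + 1) * qq τ ^ (n + 1)

/-- Eisenstein series `E₆(τ) = 1 - 504 Σ_{n≥1} σ₅(n) qⁿ`. -/
noncomputable def E₆ (τ : ℂ) : ℂ := 1 - 504 * ∑' n : ℕ, sigmaC 5 (n + 1) * qq τ ^ (n + 1)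

/-- Dedekind eta function `η(τ) = exp(πiτ/12) ∏_{n≥1} (1 - qⁿ)`. -/
noncomputable def η (τ : ℂ) : ℂ :=
  Complex.exp (Real.pi * Complex.I * τ / 12) * ∏' n : ℕ, (1 - qq τ ^ (n + 1))

/-- Theta function `θ(τ) = Σ_{n ∈ ℤ} q^{n²}`. -/
noncomputable def θ (τ : ℂ) : ℂ := ∑' n : ℤ, qq τ ^ (n ^ 2)

/-- The character `χ₋₄`: `χ₋₄(d) = 1, -1, 0` according as `d ≡ 1, 3, 0/2 (mod 4)`. -/
noncomputable def χ₄ (d : ℕ) : ℂ := if d % 4 = 1 then 1 else if d % 4 = 3 then -1 else 0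

/-- The character `χ₋₃`: `χ₋₃(d) = 1, -1, 0` according as `d ≡ 1, 2, 0 (mod 3)`. -/
noncomputable def χ₃ (d : ℕ) : ℂ := if d % 3 = 1 then 1 else if d % 3 = 2 then -1 else 0

/-- `E_{1,-4}(τ) = 1/4 + Σ_{n≥1} (Σ_{d∣n} χ₋₄(d)) qⁿ`. -/
noncomputable def E₁₄ (τ : ℂ) : ℂ :=
  1 / 4 + ∑' n : ℕ, (∑ d ∈ (n + 1).divisors, χ₄ d) * qq τ ^ (n + 1)

/-- `E_{1,-3}(τ) = 1/6 + Σ_{n≥1} (Σ_{d∣n} χ₋₃(d)) qⁿ`. -/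
noncomputable def E₁₃ (τ : ℂ) : ℂ :=
  1 / 6 + ∑' n : ℕ, (∑ d ∈ (n + 1).divisors, χ₃ d) * qq τ ^ (n + 1)

/-- `E_{2,2}(τ) = 2E₂(2τ) - E₂(τ)`. -/
noncomputable def E₂₂ (τ : ℂ) : ℂ := 2 * E₂ (2 * τ) - E₂ τ

/-- `E_{2,4}(τ) = (4E₄(2τ) - E₄(τ))/3`. -/
noncomputable def E₂₄ (τ : ℂ) : ℂ := (4 * E₄ (2 * τ) - E₄ τ) / 3

/-- `E_{3,2}(τ) = (3E₂(3τ) - E₂(τ))/2`. -/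
noncomputable def E₃₂ (τ : ℂ) : ℂ := (3 * E₂ (3 * τ) - E₂ τ) / 2

/-- `E_{3,4}(τ) = (9E₄(3τ) - E₄(τ))/8`. -/
noncomputable def E₃₄ (τ : ℂ) : ℂ := (9 * E₄ (3 * τ) - E₄ τ) / 8

/-- `E_{4,2}(τ) = (4E₂(4τ) - E₂(τ))/3`. -/
noncomputable def E₄₂ (τ : ℂ) : ℂ := (4 * E₂ (4 * τ) - E₂ τ) / 3

/-- `E'_{4,2}(τ) = 4E₂(4τ) - 4E₂(2τ) + E₂(τ)`. -/
noncomputable def E₄₂' (τ : ℂ) : ℂ := 4 * E₂ (4 * τ) - 4 * E₂ (2 * τ) + E₂ τ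

/-- `f_{1,j}(τ) = 2E₂(τ) - ((3+(-1)ʲi√3)/6)E₂(τ/2) - ((3-(-1)ʲi√3)/6)E₂((τ+1)/2)`. -/
noncomputable def f₁ (j : ℕ) (τ : ℂ) : ℂ :=
  2 * E₂ τ - ((3 + (-1 : ℂ) ^ j * Complex.I * Real.sqrt 3) / 6) * E₂ (τ / 2)
    - ((3 - (-1 : ℂ) ^ j * Complex.I * Real.sqrt 3) / 6) * E₂ ((τ + 1) / 2)

/-- `g_{1,j}(τ) = (3/2)E₂(τ) - (1/4) Σ_{0≤m≤2, m≢j (mod 3)} E₂((τ+m)/3)`. -/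
noncomputable def g₁ (j : ℕ) (τ : ℂ) : ℂ :=
  (3 / 2) * E₂ τ -
    (1 / 4) * ∑ m ∈ (Finset.range 3).filter (fun m => ¬ m % 3 = j % 3), E₂ ((τ + m) / 3)

/-- `f_{2,j}(τ) = 4E_{1,-4}(τ) + (-1)ʲ·2i·(E_{1,-4}(τ/2) - E_{1,-4}((τ+1)/2))`. -/
noncomputable def f₂ (j : ℕ) (τ : ℂ) : ℂ :=
  4 * E₁₄ τ + (-1 : ℂ) ^ j * 2 * Complex.I * (E₁₄ (τ / 2) - E₁₄ ((τ + 1) / 2))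

/-- `f_{3,j}(τ) = 6E_{1,-3}(2τ) + (-1)ʲ·i√3·(E_{1,-3}(τ/2) - E_{1,-3}((τ+1)/2))`. -/
noncomputable def f₃ (j : ℕ) (τ : ℂ) : ℂ :=
  6 * E₁₃ (2 * τ) +
    (-1 : ℂ) ^ j * Complex.I * Real.sqrt 3 * (E₁₃ (τ / 2) - E₁₃ ((τ + 1) / 2))

/-- `f_{4,j}(τ) = θ(τ/2 - (-1)ʲ/4)`. -/
noncomputable def f₄ (j : ℕ) (τ : ℂ) : ℂ := θ (τ / 2 - (-1 : ℂ) ^ j / 4)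

/-- `g_{4,j}(τ) = 2θ(2τ)² - θ((τ+j)/2)²`. -/
noncomputable def g₄ (j : ℕ) (τ : ℂ) : ℂ := 2 * θ (2 * τ) ^ 2 - θ ((τ + j) / 2) ^ 2

/-- `E_{3,-3,1}(τ) = -1/9 + Σ_{n≥1} (Σ_{d∣n} d²χ₋₃(d)) qⁿ`. -/
noncomputable def E₃₃₁ (τ : ℂ) : ℂ :=
  -(1 / 9) + ∑' n : ℕ, (∑ d ∈ (n + 1).divisors, (d : ℂ) ^ 2 * χ₃ d) * qq τ ^ (n + 1)

/-- `E_{3,1,-3}(τ) = Σ_{n≥1} (Σ_{d∣n} d²χ₋₃(n/d)) qⁿ`. -/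
noncomputable def E₃₁₃ (τ : ℂ) : ℂ :=
  ∑' n : ℕ, (∑ d ∈ (n + 1).divisors, (d : ℂ) ^ 2 * χ₃ ((n + 1) / d)) * qq τ ^ (n + 1)

lemma tsum_sigmaC_mul_qq_pow (k : ℕ) (τ : ℂ) :
    ∑' n : ℕ, sigmaC k (n + 1) * qq τ ^ (n + 1) =
      ∑' n : ℕ+, (ArithmeticFunction.sigma k n : ℂ) * cexp (2 * Real.pi * I * τ) ^ (n : ℤ) := by
  rw [← tsum_pnat_eq_tsum_succ (f := fun n ↦ sigmaC k n * qq τ ^ n)]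
  simp [sigmaC, qq, ArithmeticFunction.sigma_apply]

lemma E₄_eq_modularForm (z : UpperHalfPlane) : E₄ z = ModularForm.E₄ z := by
  rw [E₄, tsum_sigmaC_mul_qq_pow, ModularForm.E₄,
    EisensteinSeries.q_expansion_bernoulli (by norm_num) ⟨2, rfl⟩,
    show bernoulli 4 = -1 / 30 by decide +kernel]
  norm_num

lemma E₆_eq_modularForm (z : UpperHalfPlane) : E₆ z = ModularForm.E₆ z := by
  rw [E₆, tsum_sigmaC_mul_qq_pow, ModularForm.E₆,
    EisensteinSeries.q_expansion_bernoulli (by norm_num) ⟨3, rfl⟩,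
    show bernoulli 6 = 1 / 42 by decide +kernel]
  norm_num

lemma η_eq_modularForm_eta (τ : ℂ) : η τ = ModularForm.eta τ := by
  simp only [η, ModularForm.eta, ModularForm.eta_q_eq_pow, qq, Function.Periodic.qParam]
  congr 2
  push_cast
  ring

theorem stmt0 (τ : ℂ) (hτ : 0 < τ.im) :
    E₄ τ ^ 3 - E₆ τ ^ 2 = 1728 * η τ ^ 24 := by
  have h := ModularForm.discriminant_eq_E₄_cube_sub_E₆_sq ⟨τ, hτ⟩
  rw [ModularForm.discriminant, ← E₄_eq_modularForm, ← E₆_eq_modularForm,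
    ← η_eq_modularForm_eta] at h
  linear_combination -1728 * h
end

section
/- For every τ in the complex upper half plane, f_{1,0}(τ)·f_{1,1}(τ) = E₄(τ); moreover f_{1,j}(((−1)ʲ + i√3)/2) = 0 for j ∈ {0,1}. -/
open Complex

open UpperHalfPlane hiding I
open Filter Topology ModularGroup
open scoped MatrixGroups ModularForm Manifold

/-- A holomorphic function on the upper half plane satisfying the modular transformation laws of
weight `k < 12` for the full modular group and vanishing at `i∞` is zero. -/
lemma eq_zero_of_weight_lt_twelve {k : ℕ} (hk : k < 12) {g : ℂ → ℂ}
    (hd : DifferentiableOn ℂ g {τ | 0 < τ.im})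
    (hT : ∀ τ : ℂ, 0 < τ.im → g (τ + 1) = g τ)
    (hS : ∀ τ : ℂ, 0 < τ.im → g (-1 / τ) = τ ^ k * g τ)
    (h0 : Tendsto g (comap Complex.im atTop) (𝓝 0)) {τ : ℂ} (hτ : 0 < τ.im) : g τ = 0 := by
  have hγ := SlashInvariantForm.slash_action_generators_SL2Z (f := fun z : ℍ ↦ g z) (k := k)
    (by
      ext z
      have hz : (z : ℂ) ^ k ≠ 0 := pow_ne_zero k z.ne_zero
      have h := hS z z.im_pos
      rw [neg_div, one_div, ← inv_neg] at h
      rw [SlashInvariantForm.slash_S_apply, UpperHalfPlane.coe_mk, h, zpow_neg, zpow_natCast,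
        mul_comm, inv_mul_cancel_left₀ hz])
    (by
      ext z
      have h := hT z z.im_pos
      rw [ModularForm.SL_slash_apply, modular_T_smul, ModularGroup.denom_apply]
      simp [T, add_comm, h])
  let f : CuspForm 𝒮ℒ k :=
    { toFun := fun z ↦ g z
      slash_action_eq' := fun _ ⟨γ, h⟩ ↦ h ▸ hγ γ
      holo' := by
        rw [UpperHalfPlane.mdifferentiable_iff]
        exact hd.congr fun z hz ↦ by simp [ofComplex_apply_of_im_pos hz]
      zero_at_cusps' := fun hc ↦ by
        rw [Subgroup.IsArithmetic.isCusp_iff_isCusp_SL2Z] at hc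
        rw [OnePoint.isZeroAt_iff_forall_SL2Z hc]
        intro γ _
        rw [hγ γ]
        exact h0.comp tendsto_coe_atImInfty }
  have hf : f = 0 :=
    rank_zero_iff_forall_zero.mp (CuspForm.rank_eq_zero_of_weight_lt_twelve (by lia)) f
  exact DFunLike.congr_fun hf ⟨τ, hτ⟩

lemma sigmaC_eq_sigma (k n : ℕ) : sigmaC k n = (ArithmeticFunction.sigma k n : ℂ) := by
  simp [sigmaC, ArithmeticFunction.sigma_apply]

lemma E₂_coe (z : ℍ) : E₂ z = EisensteinSeries.E2 z := by
  rw [EisensteinSeries.E2_eq_tsum_cexp, E₂,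
    tsum_pnat_eq_tsum_succ
      (f := fun n ↦ (ArithmeticFunction.sigma 1 n : ℂ) * cexp (2 * Real.pi * I * z) ^ n)]
  simp [sigmaC_eq_sigma, qq]

lemma E₄_coe (z : ℍ) : E₄ z = ModularForm.E₄ z := by
  rw [EisensteinSeries.q_expansion_bernoulli _ ⟨2, rfl⟩, E₄,
    show bernoulli 4 = -1 / 30 by decide +kernel]
  simp only [zpow_natCast]
  rw [tsum_pnat_eq_tsum_succ
    (f := fun n ↦ (ArithmeticFunction.sigma (4 - 1) n : ℂ) * cexp (2 * Real.pi * I * z) ^ n)]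
  simp [sigmaC_eq_sigma, qq]
  norm_num

lemma differentiableOn_E₂ : DifferentiableOn ℂ E₂ {τ | 0 < τ.im} :=
  (UpperHalfPlane.mdifferentiable_iff.mp E2_mdifferentiable).congr fun z hz ↦ by
    simp [ofComplex_apply_of_im_pos hz, ← E₂_coe]

lemma differentiableOn_E₄ : DifferentiableOn ℂ E₄ {τ | 0 < τ.im} :=
  (UpperHalfPlane.mdifferentiable_iff.mp ModularForm.E₄.holo').congr fun z hz ↦ by
    simpa [ofComplex_apply_of_im_pos hz] using E₄_coe ⟨z, hz⟩

lemma qq_add_one (τ : ℂ) : qq (τ + 1) = qq τ := by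
  simp [qq, mul_add, Complex.exp_add]

lemma E₂_add_one (τ : ℂ) : E₂ (τ + 1) = E₂ τ := by simp [E₂, qq_add_one]

lemma E₄_add_one (τ : ℂ) : E₄ (τ + 1) = E₄ τ := by simp [E₄, qq_add_one]

lemma E₂_neg_one_div {τ : ℂ} (hτ : 0 < τ.im) :
    E₂ (-1 / τ) = τ ^ 2 * E₂ τ + 6 * τ / (Real.pi * I) := by
  have h := congrFun (EisensteinSeries.E2_slash_action S) ⟨τ, hτ⟩
  have hτ0 : τ ≠ 0 := by rintro rfl; simp at hτ
  have hpi : (Real.pi : ℂ) ≠ 0 := by simp [Real.pi_ne_zero]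
  rw [SlashInvariantForm.slash_S_apply, Pi.sub_apply, Pi.smul_apply, EisensteinSeries.D2_S,
    ← E₂_coe, ← E₂_coe, riemannZeta_two] at h
  simp only [smul_eq_mul, inv_neg, zpow_neg] at h
  rw [neg_div, one_div]
  field_simp at h ⊢
  linear_combination I * h - 6 * τ * I_sq

lemma E₄_neg_one_div {τ : ℂ} (hτ : 0 < τ.im) : E₄ (-1 / τ) = τ ^ 4 * E₄ τ := by
  have h : ((ModularForm.E₄ : ℍ → ℂ) ∣[(4 : ℤ)] S) ⟨τ, hτ⟩ = ModularForm.E₄ ⟨τ, hτ⟩ :=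
    congrFun (ModularForm.E₄.slash_action_eq' _ ⟨S, rfl⟩) ⟨τ, hτ⟩
  have hτ0 : τ ≠ 0 := by rintro rfl; simp at hτ
  rw [SlashInvariantForm.slash_S_apply, ← E₄_coe, ← E₄_coe, UpperHalfPlane.coe_mk,
    UpperHalfPlane.coe_mk, zpow_neg, mul_inv_eq_iff_eq_mul₀ (zpow_ne_zero _ hτ0), inv_neg] at h
  rw [neg_div, one_div, h, mul_comm]
  rfl

lemma tendsto_qq : Tendsto qq (comap Complex.im atTop) (𝓝 0) := by
  refine ((Function.Periodic.qParam_tendsto one_pos).mono_right nhdsWithin_le_nhds).congr fun τ ↦ ?_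
  simp [Function.Periodic.qParam, qq]

lemma tendsto_tsum_sigmaC (k : ℕ) :
    Tendsto (fun τ ↦ ∑' n : ℕ, sigmaC k (n + 1) * qq τ ^ (n + 1)) (comap Complex.im atTop)
      (𝓝 0) := by
  have hs := (summable_nat_add_iff 1).mpr
    (EisensteinSeries.summable_sigma_mul_cexp_pow (k := k + 1) (by lia) UpperHalfPlane.I).norm
  rw [← tsum_zero (β := ℕ)]
  refine tendsto_tsum_of_dominated_convergence hs (fun n ↦ ?_) ?_
  · simpa using (tendsto_qq.pow (n + 1)).const_mul (sigmaC k (n + 1))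
  · filter_upwards [preimage_mem_comap (Ici_mem_atTop 1)] with τ hτ n
    have hτ : 1 ≤ τ.im := hτ
    rw [norm_mul, norm_mul, norm_pow, norm_pow, sigmaC_eq_sigma]
    gcongr ?_ * ?_ ^ _
    · simp
    · simp [qq, Complex.norm_exp]
      nlinarith [Real.pi_pos]

lemma tendsto_E₂ : Tendsto E₂ (comap Complex.im atTop) (𝓝 1) := by
  simpa [E₂] using! ((tendsto_tsum_sigmaC 1).const_mul 24).const_sub 1

lemma tendsto_E₄ : Tendsto E₄ (comap Complex.im atTop) (𝓝 1) := by
  simpa [E₄] using! ((tendsto_tsum_sigmaC 3).const_mul 240).const_add 1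

/-- The image of `E₂₂` under `τ ↦ -1 / τ`, in weight two. -/
noncomputable def E₂₂S (τ : ℂ) : ℂ := E₂ (τ / 2) / 2 - E₂ τ

/-- The image of `E₂₂` under `τ ↦ -1 / (τ + 1)`, in weight two. -/
noncomputable def E₂₂ST (τ : ℂ) : ℂ := E₂ ((τ + 1) / 2) / 2 - E₂ τ

lemma im_neg_one_div_pos {τ : ℂ} (hτ : 0 < τ.im) : 0 < (-1 / τ).im := by
  rw [neg_div, one_div, ← inv_neg]
  exact UpperHalfPlane.im_inv_neg_coe_pos ⟨τ, hτ⟩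

lemma E₂₂_add_one (τ : ℂ) : E₂₂ (τ + 1) = E₂₂ τ := by
  simp only [E₂₂, E₂_add_one]
  rw [show 2 * (τ + 1) = 2 * τ + 1 + 1 by ring, E₂_add_one, E₂_add_one]

lemma E₂₂S_add_one (τ : ℂ) : E₂₂S (τ + 1) = E₂₂ST τ := by simp only [E₂₂S, E₂₂ST, E₂_add_one]

lemma E₂₂ST_add_one (τ : ℂ) : E₂₂ST (τ + 1) = E₂₂S τ := by
  simp only [E₂₂S, E₂₂ST, E₂_add_one]
  rw [show (τ + 1 + 1) / 2 = τ / 2 + 1 by ring, E₂_add_one]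

lemma E₂₂_neg_one_div {τ : ℂ} (hτ : 0 < τ.im) : E₂₂ (-1 / τ) = τ ^ 2 * E₂₂S τ := by
  have h : 0 < (τ / 2).im := by simpa using hτ
  have hτ0 : τ ≠ 0 := by rintro rfl; simp at hτ
  rw [E₂₂, E₂₂S, show 2 * (-1 / τ) = -1 / (τ / 2) by field_simp, E₂_neg_one_div h,
    E₂_neg_one_div hτ]
  ring

lemma E₂₂S_neg_one_div {τ : ℂ} (hτ : 0 < τ.im) : E₂₂S (-1 / τ) = τ ^ 2 * E₂₂ τ := by
  have hτ0 : τ ≠ 0 := by rintro rfl; simp at hτ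
  have h := E₂₂_neg_one_div (im_neg_one_div_pos hτ)
  rw [show -1 / (-1 / τ) = τ by field_simp] at h
  rw [h]
  field_simp

lemma E₂₂ST_neg_one_div {τ : ℂ} (hτ : 0 < τ.im) : E₂₂ST (-1 / τ) = τ ^ 2 * E₂₂ST τ := by
  have hτ0 : τ ≠ 0 := by rintro rfl; simp at hτ
  have hτ1 : τ - 1 ≠ 0 := fun h ↦ by
    rw [sub_eq_zero.mp h] at hτ
    simp at hτ
  have hx : 0 < ((τ - 1) / 2).im := by simpa using hτ
  have hz : 0 < ((-1 / τ + 1) / 2).im := by simpa using im_neg_one_div_pos hτ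
  have h₁ := E₂_neg_one_div hx
  have h₂ := E₂_neg_one_div hz
  have h₃ : -1 / ((τ - 1) / 2) = -1 / ((-1 / τ + 1) / 2) + 1 + 1 := by
    have : -1 + τ ≠ 0 := by rwa [neg_add_eq_sub]
    field_simp
    ring
  rw [h₃, E₂_add_one, E₂_add_one, h₂, ← E₂_add_one ((τ - 1) / 2),
    show (τ - 1) / 2 + 1 = (τ + 1) / 2 by ring] at h₁
  rw [E₂₂ST, E₂₂ST, E₂_neg_one_div hτ]
  have hpi : (Real.pi : ℂ) ≠ 0 := by simp [Real.pi_ne_zero]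
  have h₄ : (-1 / τ + 1) / 2 = (τ - 1) / 2 / τ := by field_simp; ring
  rw [h₄] at h₁ ⊢
  generalize E₂ ((τ - 1) / 2 / τ) = C at h₁ ⊢
  generalize E₂ ((τ + 1) / 2) = D at h₁ ⊢
  have h₅ : C = τ ^ 2 * D + 12 * τ / (Real.pi * I) := by
    field_simp at h₁ ⊢
    refine mul_left_cancel₀ hτ1 ?_
    linear_combination h₁
  rw [h₅]
  ring

lemma differentiableOn_E₂_comp {φ : ℂ → ℂ} (hφ : Differentiable ℂ φ)
    (hpos : ∀ τ : ℂ, 0 < τ.im → 0 < (φ τ).im) :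
    DifferentiableOn ℂ (fun τ ↦ E₂ (φ τ)) {τ | 0 < τ.im} :=
  differentiableOn_E₂.comp hφ.differentiableOn hpos

lemma differentiableOn_E₂₂ : DifferentiableOn ℂ E₂₂ {τ | 0 < τ.im} :=
  ((differentiableOn_E₂_comp (φ := fun τ ↦ 2 * τ) (by fun_prop) (by simp)).const_mul 2).sub
    differentiableOn_E₂

lemma differentiableOn_E₂₂S : DifferentiableOn ℂ E₂₂S {τ | 0 < τ.im} :=
  ((differentiableOn_E₂_comp (φ := fun τ ↦ τ / 2) (by fun_prop) (by simp)).div_const 2).sub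
    differentiableOn_E₂

lemma differentiableOn_E₂₂ST : DifferentiableOn ℂ E₂₂ST {τ | 0 < τ.im} :=
  ((differentiableOn_E₂_comp (φ := fun τ ↦ (τ + 1) / 2) (by fun_prop) (by simp)).div_const 2).sub
    differentiableOn_E₂

lemma tendsto_E₂_comp {φ : ℂ → ℂ} {c : ℝ} (hc : 0 < c) (hφ : ∀ τ, (φ τ).im = c * τ.im) :
    Tendsto (fun τ ↦ E₂ (φ τ)) (comap Complex.im atTop) (𝓝 1) := by
  refine tendsto_E₂.comp (tendsto_comap_iff.mpr ?_)
  simpa [Function.comp_def, hφ] using! tendsto_comap.const_mul_atTop hc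

lemma tendsto_E₂₂ : Tendsto E₂₂ (comap Complex.im atTop) (𝓝 1) := by
  have h := ((tendsto_E₂_comp (φ := fun τ ↦ 2 * τ) (c := 2) (by norm_num) (by simp)).const_mul
    2).sub tendsto_E₂
  norm_num at h
  exact h

lemma tendsto_E₂₂S : Tendsto E₂₂S (comap Complex.im atTop) (𝓝 (-(1 / 2))) := by
  have h := ((tendsto_E₂_comp (φ := fun τ ↦ τ / 2) (c := 1 / 2) (by norm_num)
    (by simp [div_eq_inv_mul])).div_const 2).sub tendsto_E₂
  norm_num at h
  exact h

lemma tendsto_E₂₂ST : Tendsto E₂₂ST (comap Complex.im atTop) (𝓝 (-(1 / 2))) := by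
  have h := ((tendsto_E₂_comp (φ := fun τ ↦ (τ + 1) / 2) (c := 1 / 2) (by norm_num)
    (by simp [div_eq_inv_mul])).div_const 2).sub tendsto_E₂
  norm_num at h
  exact h

lemma E₂₂_add_E₂₂S_add_E₂₂ST {τ : ℂ} (hτ : 0 < τ.im) : E₂₂ τ + E₂₂S τ + E₂₂ST τ = 0 := by
  refine eq_zero_of_weight_lt_twelve (k := 2) (g := fun τ ↦ E₂₂ τ + E₂₂S τ + E₂₂ST τ) (by norm_num)
    ((differentiableOn_E₂₂.add differentiableOn_E₂₂S).add differentiableOn_E₂₂ST)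
    (fun τ _ ↦ ?_) (fun τ hτ ↦ ?_) ?_ hτ
  · simp only [E₂₂_add_one, E₂₂S_add_one, E₂₂ST_add_one]
    ring
  · simp only [E₂₂_neg_one_div hτ, E₂₂S_neg_one_div hτ, E₂₂ST_neg_one_div hτ]
    ring
  · have h := (tendsto_E₂₂.add tendsto_E₂₂S).add tendsto_E₂₂ST
    norm_num at h
    exact h

lemma E₄_eq_sum_sq {τ : ℂ} (hτ : 0 < τ.im) :
    2 / 3 * (E₂₂ τ ^ 2 + E₂₂S τ ^ 2 + E₂₂ST τ ^ 2) = E₄ τ := by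
  rw [← sub_eq_zero]
  refine eq_zero_of_weight_lt_twelve (k := 4)
    (g := fun τ ↦ 2 / 3 * (E₂₂ τ ^ 2 + E₂₂S τ ^ 2 + E₂₂ST τ ^ 2) - E₄ τ) (by norm_num)
    (((((differentiableOn_E₂₂.pow 2).add (differentiableOn_E₂₂S.pow 2)).add
      (differentiableOn_E₂₂ST.pow 2)).const_mul (2 / 3)).sub differentiableOn_E₄)
    (fun τ _ ↦ ?_) (fun τ hτ ↦ ?_) ?_ hτ
  · simp only [E₂₂_add_one, E₂₂S_add_one, E₂₂ST_add_one, E₄_add_one]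
    ring
  · simp only [E₂₂_neg_one_div hτ, E₂₂S_neg_one_div hτ, E₂₂ST_neg_one_div hτ, E₄_neg_one_div hτ]
    ring
  · have h := ((((tendsto_E₂₂.pow 2).add (tendsto_E₂₂S.pow 2)).add
      (tendsto_E₂₂ST.pow 2)).const_mul (2 / 3)).sub tendsto_E₄
    norm_num at h
    exact h

lemma ofReal_sqrt_three_sq : ((Real.sqrt 3 : ℝ) : ℂ) ^ 2 = 3 := by
  rw [← Complex.ofReal_pow, Real.sq_sqrt (by norm_num)]
  norm_num

lemma f₁_add_one (τ : ℂ) : f₁ 0 (τ + 1) = f₁ 1 τ := by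
  simp only [f₁, E₂_add_one]
  rw [show (τ + 1 + 1) / 2 = τ / 2 + 1 by ring, E₂_add_one]
  ring

lemma f₁_mul_f₁ {τ : ℂ} (hτ : 0 < τ.im) : f₁ 0 τ * f₁ 1 τ = E₄ τ := by
  have h : E₂₂ τ = -(E₂₂S τ + E₂₂ST τ) := by linear_combination E₂₂_add_E₂₂S_add_E₂₂ST hτ
  rw [← E₄_eq_sum_sq hτ, h]
  simp only [f₁, E₂₂S, E₂₂ST]
  linear_combination (E₂ (τ / 2) - E₂ ((τ + 1) / 2)) ^ 2 / 36 *
    (ofReal_sqrt_three_sq - (Real.sqrt 3 : ℂ) ^ 2 * I_sq)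

lemma f₁_zero_eq_zero : f₁ 0 ((1 + I * Real.sqrt 3) / 2) = 0 := by
  set τ : ℂ := (1 + I * Real.sqrt 3) / 2 with hτ_def
  have hs := ofReal_sqrt_three_sq
  have hτ : 0 < τ.im := by simp [hτ_def]
  have hτ0 : τ ≠ 0 := by rintro h; simp [h] at hτ
  have hsq : τ ^ 2 = τ - 1 := by
    rw [hτ_def]
    linear_combination (Real.sqrt 3 : ℂ) ^ 2 / 4 * I_sq - hs / 4
  have hinv : -1 / τ = τ - 1 := by
    field_simp
    linear_combination -hsq
  have h₁ := E₂₂ST_neg_one_div hτ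
  rw [hinv, ← E₂₂S_add_one, sub_add_cancel] at h₁
  have hf : f₁ 0 τ = -(E₂₂S τ + E₂₂ST τ) - I * Real.sqrt 3 / 3 * (E₂₂S τ - E₂₂ST τ) := by
    simp only [f₁, E₂₂S, E₂₂ST]
    ring
  rw [hf, h₁, hsq, show I * Real.sqrt 3 = 2 * τ - 1 by rw [hτ_def]; ring]
  linear_combination (-2 / 3) * E₂₂ST τ * hsq

theorem stmt2 :
    (∀ τ : ℂ, 0 < τ.im → f₁ 0 τ * f₁ 1 τ = E₄ τ) ∧
    (∀ j : ℕ, j < 2 → f₁ j (((-1 : ℂ) ^ j + Complex.I * Real.sqrt 3) / 2) = 0) := by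
  refine ⟨fun τ hτ ↦ f₁_mul_f₁ hτ, fun j hj ↦ ?_⟩
  interval_cases j
  · simpa using f₁_zero_eq_zero
  · rw [← f₁_add_one, ← f₁_zero_eq_zero]
    congr 1
    ring
end

section
/- For j ∈ {0,1} and every τ in the complex upper half plane, f_{1,j}(−1/τ) = ((−1 − (−1)ʲ i√3)/2)·τ²·f_{1,j+1}(τ), where the index j+1 is taken modulo 2. -/
open Complex

open scoped ArithmeticFunction.sigma MatrixGroups

/-- On the upper half plane, `E₂` agrees with Mathlib's weight-two Eisenstein series. -/
lemma E₂_eq_E2 (z : UpperHalfPlane) : E₂ z = EisensteinSeries.E2 z := by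
  rw [EisensteinSeries.E2_eq_tsum_cexp,
    tsum_pnat_eq_tsum_succ (f := fun n ↦ (σ 1 n : ℂ) * cexp (2 * Real.pi * I * z) ^ n)]
  simp [E₂, qq, sigmaC, ArithmeticFunction.sigma_apply]

/-- The quasimodular transformation law of `E₂` under `SL(2, ℤ)`. -/
lemma E₂_moebius {a b c d : ℤ} (h : a * d - b * c = 1) {τ : ℂ} (hτ : 0 < τ.im) :
    E₂ ((a * τ + b) / (c * τ + d)) =
      (c * τ + d) ^ 2 * E₂ τ - 6 * I * c * (c * τ + d) / Real.pi := by
  let γ : SL(2, ℤ) := ⟨!![a, b; c, d], by simp [Matrix.det_fin_two, h]⟩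
  let z : UpperHalfPlane := ⟨τ, hτ⟩
  have hπ : (Real.pi : ℂ) ≠ 0 := mod_cast Real.pi_ne_zero
  have hden : UpperHalfPlane.denom γ z = c * τ + d := by
    rw [ModularGroup.denom_apply]
    simp [γ, z]
  have hne : (c * τ + d : ℂ) ≠ 0 := hden ▸ UpperHalfPlane.denom_ne_zero γ z
  have hγ : ((γ • z : UpperHalfPlane) : ℂ) = (a * τ + b) / (c * τ + d) := by
    rw [UpperHalfPlane.coe_specialLinearGroup_apply]
    simp [γ, z]
  have key := congrFun (EisensteinSeries.E2_slash_action γ) z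
  rw [ModularForm.SL_slash_apply, Pi.sub_apply, Pi.smul_apply, EisensteinSeries.D2, hden,
    ← E₂_eq_E2, ← E₂_eq_E2, hγ, riemannZeta_two] at key
  have hc : γ 1 0 = c := rfl
  have hz : (z : ℂ) = τ := rfl
  rw [hc, hz, smul_eq_mul, zpow_neg, ← div_eq_mul_inv, div_eq_iff (zpow_ne_zero _ hne)] at key
  rw [key]
  norm_cast
  push_cast
  field_simp

lemma sigma_one_two_mul_of_odd {n : ℕ} (hn : Odd n) : σ 1 (2 * n) = 3 * σ 1 n := by
  rw [ArithmeticFunction.isMultiplicative_sigma.map_mul_of_coprime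
    (Nat.coprime_two_left.mpr hn)]
  rfl

/-- The Hecke relation at the prime two for the divisor sum `σ₁`. -/
lemma sigma_one_four_mul_add (n : ℕ) : σ 1 (4 * n) + 2 * σ 1 n = 3 * σ 1 (2 * n) := by
  rcases eq_or_ne n 0 with rfl | hn
  · simp
  obtain ⟨k, m, hm, rfl⟩ := Nat.exists_eq_two_pow_mul_odd hn
  have hmul (i : ℕ) : σ 1 (2 ^ i * m) = σ 1 (2 ^ i) * σ 1 m :=
    ArithmeticFunction.isMultiplicative_sigma.map_mul_of_coprime
      ((Nat.coprime_two_left.mpr hm).pow_left i)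
  rw [show 4 * (2 ^ k * m) = 2 ^ (k + 2) * m by ring,
    show 2 * (2 ^ k * m) = 2 ^ (k + 1) * m by ring, hmul, hmul, hmul]
  simp only [ArithmeticFunction.sigma_one_apply_prime_pow Nat.prime_two, Finset.sum_range_succ]
  ring

lemma summable_sigma_one_mul_pow {x : ℂ} (hx : ‖x‖ < 1) :
    Summable fun n : ℕ ↦ (σ 1 n : ℂ) * x ^ n := by
  refine (summable_norm_pow_mul_geometric_of_norm_lt_one 2 hx).of_norm_bounded fun n ↦ ?_
  rw [norm_mul, norm_mul]
  gcongr
  rw [← Nat.cast_pow, norm_natCast, norm_natCast]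
  exact_mod_cast ArithmeticFunction.sigma_le_pow_succ 1 n

lemma Summable.tsum_eq_even_add_odd {f : ℕ → ℂ} (hf : Summable f) :
    ∑' n, f n = ∑' k, f (2 * k) + ∑' k, f (2 * k + 1) :=
  (tsum_even_add_odd (hf.comp_injective (mul_right_injective₀ two_ne_zero))
    (hf.comp_injective ((add_left_injective 1).comp (mul_right_injective₀ two_ne_zero)))).symm

/-- The Hecke relation at the prime two for the generating series of `σ₁`. -/
lemma tsum_sigma_one_hecke_two {x : ℂ} (hx : ‖x‖ < 1) :
    ∑' n : ℕ, (σ 1 n : ℂ) * x ^ n + ∑' n : ℕ, (σ 1 n : ℂ) * (-x) ^ n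
        + 4 * ∑' n : ℕ, (σ 1 n : ℂ) * (x ^ 4) ^ n
      = 6 * ∑' n : ℕ, (σ 1 n : ℂ) * (x ^ 2) ^ n := by
  have heven : Function.Injective fun n : ℕ ↦ 2 * n := mul_right_injective₀ two_ne_zero
  have hpow (k : ℕ) (hk : k ≠ 0) : ‖x ^ k‖ < 1 := by
    rw [norm_pow]; exact pow_lt_one₀ (norm_nonneg x) hx hk
  have hs := summable_sigma_one_mul_pow hx
  have hsneg := summable_sigma_one_mul_pow (x := -x) (by simpa using hx)
  have hs2 := summable_sigma_one_mul_pow (hpow 2 two_ne_zero)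
  have hs4 := summable_sigma_one_mul_pow (hpow 4 four_ne_zero)
  have hse : Summable fun k : ℕ ↦ (σ 1 (2 * k) : ℂ) * (x ^ 2) ^ k :=
    (hs.comp_injective heven).congr fun k ↦ by simp [pow_mul]
  have hs2e : Summable fun k : ℕ ↦ (σ 1 (2 * k) : ℂ) * (x ^ 2) ^ (2 * k) :=
    hs2.comp_injective heven
  have hdouble : ∑' n : ℕ, (σ 1 n : ℂ) * x ^ n + ∑' n : ℕ, (σ 1 n : ℂ) * (-x) ^ n
      = 2 * ∑' k : ℕ, (σ 1 (2 * k) : ℂ) * (x ^ 2) ^ k := by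
    rw [← hs.tsum_add hsneg, (hs.add hsneg).tsum_eq_even_add_odd, ← tsum_mul_left]
    simp only [pow_mul, pow_succ _ (2 * _), neg_sq]
    simp [← two_mul]
  have hsplit : ∑' k : ℕ, (σ 1 (2 * k) : ℂ) * (x ^ 2) ^ k
      = 3 * ∑' n : ℕ, (σ 1 n : ℂ) * (x ^ 2) ^ n - 2 * ∑' n : ℕ, (σ 1 n : ℂ) * (x ^ 4) ^ n := by
    rw [hse.tsum_eq_even_add_odd, hs2.tsum_eq_even_add_odd,
      mul_add, add_sub_right_comm, ← tsum_mul_left, ← tsum_mul_left, ← tsum_mul_left,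
      ← Summable.tsum_sub (hs2e.mul_left 3) (hs4.mul_left 2)]
    congr 1
    · refine tsum_congr fun k ↦ ?_
      have h : (σ 1 (4 * k) : ℂ) + 2 * σ 1 k = 3 * σ 1 (2 * k) :=
        mod_cast sigma_one_four_mul_add k
      rw [← mul_assoc 2 2 k, ← pow_mul, ← pow_mul, ← mul_assoc 2 2 k]
      linear_combination x ^ (4 * k) * h
    · refine tsum_congr fun k ↦ ?_
      rw [sigma_one_two_mul_of_odd (odd_two_mul_add_one k)]
      push_cast
      ring
  rw [hdouble, hsplit]
  ring

lemma norm_qq_lt_one {τ : ℂ} (hτ : 0 < τ.im) : ‖qq τ‖ < 1 :=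
  UpperHalfPlane.norm_exp_two_pi_I_lt_one ⟨τ, hτ⟩

lemma E₂_eq_tsum_sigma {τ : ℂ} (hτ : 0 < τ.im) :
    E₂ τ = 1 - 24 * ∑' n : ℕ, (σ 1 n : ℂ) * qq τ ^ n := by
  rw [(summable_sigma_one_mul_pow (norm_qq_lt_one hτ)).tsum_eq_zero_add]
  simp [E₂, sigmaC, ArithmeticFunction.sigma_apply]

/-- `E₂` is an eigenfunction of the Hecke operator at the prime two. -/
lemma E₂_hecke_two {τ : ℂ} (hτ : 0 < τ.im) :
    E₂ (τ / 2) + E₂ ((τ + 1) / 2) + 4 * E₂ (2 * τ) = 6 * E₂ τ := by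
  have him : 0 < (τ / 2).im := by simpa using hτ
  have hneg : qq ((τ + 1) / 2) = -qq (τ / 2) := by
    rw [qq, qq, ← exp_add_pi_mul_I]
    ring_nf
  have hsq : qq τ = qq (τ / 2) ^ 2 := by
    rw [qq, qq, ← exp_nat_mul]
    ring_nf
  have hfour : qq (2 * τ) = qq (τ / 2) ^ 4 := by
    rw [qq, qq, ← exp_nat_mul]
    ring_nf
  rw [E₂_eq_tsum_sigma him, E₂_eq_tsum_sigma (τ := (τ + 1) / 2) (by simpa using hτ),
    E₂_eq_tsum_sigma (τ := 2 * τ) (by simpa using hτ), E₂_eq_tsum_sigma hτ, hneg, hsq, hfour]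
  linear_combination -24 * tsum_sigma_one_hecke_two (norm_qq_lt_one him)

theorem stmt3 (j : ℕ) (hj : j < 2) (τ : ℂ) (hτ : 0 < τ.im) :
    f₁ j (-1 / τ) = ((-1 - (-1 : ℂ) ^ j * Complex.I * Real.sqrt 3) / 2) * τ ^ 2 * f₁ (j + 1) τ := by
  have hτ0 : τ ≠ 0 := fun h ↦ by simp [h] at hτ
  have h1 : E₂ (-1 / τ) = τ ^ 2 * E₂ τ - 6 * I * τ / Real.pi := by
    simpa using E₂_moebius (a := 0) (b := -1) (c := 1) (d := 0) (by norm_num) hτ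
  have h2 : E₂ (-1 / τ / 2) = (2 * τ) ^ 2 * E₂ (2 * τ) - 6 * I * (2 * τ) / Real.pi := by
    rw [div_div, mul_comm τ 2]
    simpa using E₂_moebius (a := 0) (b := -1) (c := 1) (d := 0) (τ := 2 * τ) (by norm_num)
      (by simpa using hτ)
  have h3 : E₂ ((-1 / τ + 1) / 2)
      = τ ^ 2 * E₂ ((τ + 1) / 2) - 6 * I * 2 * τ / Real.pi := by
    have h := E₂_moebius (a := 1) (b := -1) (c := 2) (d := -1) (τ := (τ + 1) / 2) (by norm_num)
      (by simpa using hτ)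
    push_cast at h
    have hden : 2 * ((τ + 1) / 2) + -1 = τ := by ring
    rw [hden] at h
    rw [← h]
    congr 1
    field_simp
    ring
  have hw : ((-1 : ℂ) ^ j * I * Real.sqrt 3) ^ 2 = -3 := by
    have h3 : (Real.sqrt 3 : ℂ) ^ 2 = 3 := by
      rw [← ofReal_pow, Real.sq_sqrt (by norm_num)]; norm_num
    rw [mul_pow, mul_pow, h3, I_sq, ← pow_mul, mul_comm j 2, pow_mul]
    norm_num
  have hecke := E₂_hecke_two hτ
  rw [f₁, f₁, h1, h2, h3, pow_succ (-1 : ℂ) j]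
  generalize (-1 : ℂ) ^ j = s at *
  set w := s * I * Real.sqrt 3 with hwdef
  have hw' : s * -1 * I * Real.sqrt 3 = -w := by rw [hwdef]; ring
  rw [hw']
  linear_combination (-(3 + w) / 6 * τ ^ 2) * hecke +
    τ ^ 2 * (E₂ (τ / 2) - E₂ ((τ + 1) / 2)) / 12 * hw
end
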